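/- arXiv:2504.00807 — 4 statements merged into one kernel-verified Lean document; each statement's English description precedes it below -/
import Mathlib

section
/- Let T = (V, root, par) be a rooted directed tree that is narrow with width m. Then the Cesàro map Λ_T sends every f ∈ ℓ²(V) to an element of ℓ²(V), and ‖Λ_T f‖ ≤ 2√m · ‖f‖ for all f ∈ ℓ²(V); hence the Cesàro operator C_T is a bounded linear operator on ℓ²(V) with ‖C_T‖ ≤ 2√(width(T)). -/
noncomputable section

open scoped ENNReal

/-- A rooted directed tree encoded by a vertex set `V`, a root, and a parent map. -/
structure TreeData (V : Type) where
  root : V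
  par : V → V
  par_root : par root = root
  hroot : ∀ v : V, ∃ n : ℕ, par^[n] v = root

namespace TreeData

variable {V : Type}

open scoped Classical in
/-- The depth of a vertex: the least `n` with `par^[n] v = root`. -/
def dep (T : TreeData V) (v : V) : ℕ := Nat.find (T.hroot v)

/-- The Cesàro map `Λ_T`. -/
def cesaro (T : TreeData V) (f : V → ℂ) : V → ℂ := fun v =>
  ((T.dep v : ℂ) + 1)⁻¹ * ∑ j ∈ Finset.range (T.dep v + 1), f (T.par^[j] v)

/-- The `n`-th level `Chi^⟨n⟩(root)`: vertices of depth `n`. -/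
def level (T : TreeData V) (n : ℕ) : Set V := {v : V | T.dep v = n}

/-- The set of children of a vertex. -/
def chi (T : TreeData V) (u : V) : Set V := {v : V | v ≠ T.root ∧ T.par v = u}

end TreeData

/-- The Hilbert space `ℓ²(V)` of square-summable complex functions on `V`. -/
abbrev L2 (V : Type) : Type := lp (fun _ : V => ℂ) 2

/-!
The modulus of `Λ_T f` at a vertex of depth `n` is at most the mean of `a 0, …, a n`, where `a k` is
the `ℓ²` norm of `f` on the `k`-th level, and at most `m` vertices have depth `n`. Summing over the
levels, Hardy's inequality for the sequence `a` gives `‖Λ_T f‖² ≤ m · 4 ∑ a k ^ 2 = 4 m ‖f‖²`.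
-/

open Finset
open scoped BigOperators

lemma eq_succ_mul_expect_range_succ_sub {K : Type*} [Field K] [CharZero K] (a : ℕ → K) (N : ℕ) :
    a N = (N + 1) * 𝔼 k ∈ range (N + 1), a k - N * 𝔼 k ∈ range N, a k := by
  have sum_eq (n : ℕ) : ∑ k ∈ range n, a k = n * 𝔼 k ∈ range n, a k := by
    simpa only [card_range] using (card_mul_expect (range n) a).symm
  have h := sum_range_succ a N
  rw [sum_eq, sum_eq, Nat.cast_succ] at h
  exact eq_sub_of_add_eq' h.symm

-- The second summand on the left makes the induction on `N` close.
lemma sum_sq_expect_range_add_le {K : Type*} [Field K] [LinearOrder K] [IsStrictOrderedRing K]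
    (a : ℕ → K) (N : ℕ) :
    ∑ n ∈ range N, (𝔼 k ∈ range (n + 1), a k) ^ 2 + 2 * N * (𝔼 k ∈ range N, a k) ^ 2 ≤
      4 * ∑ n ∈ range N, a n ^ 2 := by
  induction N with
  | zero => simp
  | succ N ih =>
    rw [sum_range_succ, sum_range_succ (fun n ↦ a n ^ 2), Nat.cast_succ]
    have ha := eq_succ_mul_expect_range_succ_sub a N
    set A := 𝔼 k ∈ range (N + 1), a k
    set B := 𝔼 k ∈ range N, a k
    have step : A ^ 2 + 2 * (N + 1) * A ^ 2 ≤ 2 * N * B ^ 2 + 4 * a N ^ 2 := by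
      have gap : 2 * N * B ^ 2 + 4 * a N ^ 2 - (A ^ 2 + 2 * (N + 1) * A ^ 2) =
          (A - 2 * a N) ^ 2 + 2 * N * (A - B) ^ 2 := by
        rw [ha]
        ring
      have : 0 ≤ (A - 2 * a N) ^ 2 + 2 * N * (A - B) ^ 2 := by positivity
      linarith
    linarith

theorem hardy_inequality {a : ℕ → ℝ} {Q : ℝ} (ha : HasSum (fun n ↦ a n ^ 2) Q) (s : Finset ℕ) :
    ∑ n ∈ s, (𝔼 k ∈ range (n + 1), a k) ^ 2 ≤ 4 * Q := by
  obtain ⟨N, hN⟩ := s.exists_nat_subset_range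
  calc ∑ n ∈ s, (𝔼 k ∈ range (n + 1), a k) ^ 2
      ≤ ∑ n ∈ range N, (𝔼 k ∈ range (n + 1), a k) ^ 2 :=
        sum_le_sum_of_subset_of_nonneg hN fun _ _ _ ↦ sq_nonneg _
    _ ≤ ∑ n ∈ range N, (𝔼 k ∈ range (n + 1), a k) ^ 2 + 2 * N * (𝔼 k ∈ range N, a k) ^ 2 :=
        le_add_of_nonneg_right (by positivity)
    _ ≤ 4 * ∑ n ∈ range N, a n ^ 2 := sum_sq_expect_range_add_le a N
    _ ≤ 4 * Q := by
        gcongr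
        exact sum_le_hasSum _ (fun n _ ↦ sq_nonneg (a n)) ha

lemma sum_comp_le_nsmul_sum_image {ι κ M : Type*} [DecidableEq κ] [AddCommMonoid M] [PartialOrder M]
    [IsOrderedAddMonoid M] {φ : ι → κ} {m : ℕ} (hφ : ∀ k, (φ ⁻¹' {k}).encard ≤ m) {g : κ → M}
    (hg : ∀ k, 0 ≤ g k) (s : Finset ι) :
    ∑ i ∈ s, g (φ i) ≤ m • ∑ k ∈ s.image φ, g k := by
  have card_fiber_le (k : κ) : #{i ∈ s | φ i = k} ≤ m := by
    have fiber_subset : (↑{i ∈ s | φ i = k} : Set ι) ⊆ φ ⁻¹' {k} :=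
      fun _ hi ↦ (mem_filter.mp hi).2
    have h := (Set.encard_le_encard fiber_subset).trans (hφ k)
    rw [Set.encard_coe_eq_coe_finsetCard] at h
    exact_mod_cast h
  rw [sum_comp, smul_sum]
  exact sum_le_sum fun k _ ↦ nsmul_le_nsmul_left (hg k) (card_fiber_le k)

lemma hasSum_norm_sq {ι : Type*} {E : ι → Type*} [∀ i, NormedAddCommGroup (E i)] (f : lp E 2) :
    HasSum (fun i ↦ ‖f i‖ ^ 2) (‖f‖ ^ 2) := by
  simpa using lp.hasSum_norm (p := 2) (by norm_num) f

namespace TreeData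

variable {V : Type} (T : TreeData V)

lemma dep_le_iff_iterate_par_eq_root {v : V} {n : ℕ} : T.dep v ≤ n ↔ T.par^[n] v = T.root := by
  classical
  rw [dep, Nat.find_le_iff]
  refine ⟨fun ⟨k, hkn, hk⟩ ↦ ?_, fun h ↦ ⟨n, le_rfl, h⟩⟩
  rw [← Nat.sub_add_cancel hkn, Function.iterate_add_apply, hk,
    Function.iterate_fixed T.par_root]

lemma dep_iterate_par (v : V) (j : ℕ) : T.dep (T.par^[j] v) = T.dep v - j :=
  eq_of_forall_ge_iff fun n ↦ by
    rw [dep_le_iff_iterate_par_eq_root, ← Function.iterate_add_apply,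
      ← dep_le_iff_iterate_par_eq_root, tsub_le_iff_right]

section LevelNorm

variable {E : Type*} [SeminormedAddCommGroup E]

/-- The `ℓ²` norm of the restriction of `f` to the `n`-th level of the tree, which reduces estimates
on the tree to estimates on `ℕ`. It takes the value `0` if that restriction is not in `ℓ²`. -/
def levelNorm (f : V → E) (n : ℕ) : ℝ := √(∑' v : T.level n, ‖f v‖ ^ 2)

lemma levelNorm_sq (f : V → E) (n : ℕ) : T.levelNorm f n ^ 2 = ∑' v : T.level n, ‖f v‖ ^ 2 :=
  Real.sq_sqrt (tsum_nonneg fun _ ↦ by positivity)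

lemma norm_le_levelNorm {f : V → E} (hf : Summable fun v ↦ ‖f v‖ ^ 2) (v : V) :
    ‖f v‖ ≤ T.levelNorm f (T.dep v) :=
  Real.le_sqrt_of_sq_le <|
    (hf.subtype (T.level (T.dep v))).le_tsum ⟨v, rfl⟩ fun _ _ ↦ sq_nonneg _

lemma hasSum_levelNorm_sq {f : V → E} {Q : ℝ} (hf : HasSum (fun v ↦ ‖f v‖ ^ 2) Q) :
    HasSum (fun n ↦ T.levelNorm f n ^ 2) Q := by
  simp only [levelNorm_sq]
  exact hf.tsum_fiberwise T.dep

end LevelNorm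

section Cesaro

lemma cesaro_eq_expect (f : V → ℂ) (v : V) :
    T.cesaro f v = 𝔼 j ∈ range (T.dep v + 1), f (T.par^[j] v) := by
  rw [cesaro, expect_eq_sum_div_card, card_range, div_eq_inv_mul, Nat.cast_succ]

lemma cesaro_add (f g : V → ℂ) : T.cesaro (f + g) = T.cesaro f + T.cesaro g := by
  ext v
  simp only [cesaro_eq_expect, Pi.add_apply, expect_add_distrib]

lemma cesaro_smul (c : ℂ) (f : V → ℂ) : T.cesaro (c • f) = c • T.cesaro f := by
  ext v
  simp only [cesaro_eq_expect, Pi.smul_apply, smul_expect]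

lemma norm_cesaro_apply_le {f : V → ℂ} (hf : Summable fun v ↦ ‖f v‖ ^ 2) (v : V) :
    ‖T.cesaro f v‖ ≤ 𝔼 k ∈ range (T.dep v + 1), T.levelNorm f k := by
  calc ‖T.cesaro f v‖
      ≤ 𝔼 j ∈ range (T.dep v + 1), ‖f (T.par^[j] v)‖ := by
        rw [cesaro_eq_expect]
        exact RCLike.norm_expect_le (K := ℂ)
    _ ≤ 𝔼 j ∈ range (T.dep v + 1), T.levelNorm f (T.dep v - j) :=
        expect_le_expect fun j _ ↦ T.dep_iterate_par v j ▸ T.norm_le_levelNorm hf _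
    _ = 𝔼 k ∈ range (T.dep v + 1), T.levelNorm f k := by
        simp only [expect]
        rw [← sum_range_reflect (T.levelNorm f), Nat.add_sub_cancel]

variable {T} {m : ℕ} (hm : ∀ n : ℕ, (T.level n).encard ≤ m)
include hm

lemma sum_norm_cesaro_sq_le {f : V → ℂ} {Q : ℝ} (hf : HasSum (fun v ↦ ‖f v‖ ^ 2) Q)
    (s : Finset V) : ∑ v ∈ s, ‖T.cesaro f v‖ ^ 2 ≤ 4 * m * Q := by
  calc ∑ v ∈ s, ‖T.cesaro f v‖ ^ 2
      ≤ ∑ v ∈ s, (𝔼 k ∈ range (T.dep v + 1), T.levelNorm f k) ^ 2 := by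
        gcongr with v
        exact T.norm_cesaro_apply_le hf.summable v
    _ ≤ m • ∑ n ∈ s.image T.dep, (𝔼 k ∈ range (n + 1), T.levelNorm f k) ^ 2 :=
        sum_comp_le_nsmul_sum_image (φ := T.dep) hm
          (g := fun n ↦ (𝔼 k ∈ range (n + 1), T.levelNorm f k) ^ 2) (fun _ ↦ sq_nonneg _) s
    _ ≤ m • (4 * Q) := by
        gcongr
        exact hardy_inequality (T.hasSum_levelNorm_sq hf) _
    _ = 4 * m * Q := by
        rw [nsmul_eq_mul]
        ring

lemma sum_norm_cesaro_rpow_le (f : L2 V) (s : Finset V) :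
    ∑ v ∈ s, ‖T.cesaro f v‖ ^ (2 : ℝ≥0∞).toReal ≤ (2 * √m * ‖f‖) ^ (2 : ℝ≥0∞).toReal := by
  have sq_eq : (2 * √m * ‖f‖) ^ 2 = 4 * m * ‖f‖ ^ 2 := by
    rw [mul_pow, mul_pow, Real.sq_sqrt m.cast_nonneg]
    norm_num
  simpa [sq_eq] using sum_norm_cesaro_sq_le hm (hasSum_norm_sq f) s

lemma memℓp_cesaro (f : L2 V) : Memℓp (T.cesaro f) 2 :=
  memℓp_gen' (sum_norm_cesaro_rpow_le hm f)

lemma norm_cesaro_le (f : L2 V) :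
    ‖(⟨T.cesaro f, memℓp_cesaro hm f⟩ : L2 V)‖ ≤ 2 * √m * ‖f‖ :=
  lp.norm_le_of_forall_sum_le (by norm_num) (by positivity) (sum_norm_cesaro_rpow_le hm f)

/-- The Cesàro operator `C_T` on `ℓ²(V)`, for a tree whose levels have at most `m` vertices. -/
def cesaroOperator : L2 V →L[ℂ] L2 V :=
  LinearMap.mkContinuous
    { toFun f := ⟨T.cesaro f, memℓp_cesaro hm f⟩
      map_add' f g := Subtype.ext (T.cesaro_add f g)
      map_smul' c f := Subtype.ext (T.cesaro_smul c f) }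
    (2 * √m) (norm_cesaro_le hm)

lemma norm_cesaroOperator_le : ‖cesaroOperator hm‖ ≤ 2 * √m :=
  LinearMap.mkContinuous_norm_le _ (by positivity) _

end Cesaro

end TreeData

theorem cesaro_bounded_of_narrow_general {V : Type} (T : TreeData V) (m : ℕ)
    (hm : ∀ n : ℕ, (T.level n).encard ≤ m) :
    (∀ f : L2 V, ∃ hf : Memℓp (T.cesaro ⇑f) 2,
        ‖(⟨T.cesaro ⇑f, hf⟩ : L2 V)‖ ≤ 2 * Real.sqrt m * ‖f‖) ∧
    ∃ C : L2 V →L[ℂ] L2 V, (∀ (f : L2 V) (v : V), C f v = T.cesaro ⇑f v) ∧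
        ‖C‖ ≤ 2 * Real.sqrt m :=
  ⟨fun f ↦ ⟨TreeData.memℓp_cesaro hm f, TreeData.norm_cesaro_le hm f⟩,
    TreeData.cesaroOperator hm, fun _ _ ↦ rfl, TreeData.norm_cesaroOperator_le hm⟩

/-- If `T` is a narrow rooted directed tree of width `m`, then the Cesàro map
sends `ℓ²(V)` into `ℓ²(V)` with `‖Λ_T f‖ ≤ 2√m ‖f‖`; hence the Cesàro operator `C_T` is a
bounded linear operator on `ℓ²(V)` of norm at most `2 √(width T)`. -/
theorem cesaro_bounded_of_narrow {V : Type} [Countable V] [Infinite V]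
    (T : TreeData V) (m : ℕ)
    (hm : ∀ n : ℕ, (T.level n).encard ≤ m)
    (hwidth : ∀ m' : ℕ, (∀ n : ℕ, (T.level n).encard ≤ m') → m ≤ m') :
    (∀ f : L2 V, ∃ hf : Memℓp (T.cesaro ⇑f) 2,
        ‖(⟨T.cesaro ⇑f, hf⟩ : L2 V)‖ ≤ 2 * Real.sqrt m * ‖f‖) ∧
    ∃ C : L2 V →L[ℂ] L2 V, (∀ (f : L2 V) (v : V), C f v = T.cesaro ⇑f v) ∧
        ‖C‖ ≤ 2 * Real.sqrt m :=
  cesaro_bounded_of_narrow_general T m hm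
end
end

section
/- Let T = (V, root, par) be a leafless, locally finite rooted directed tree. Then the Cesàro map Λ_T has no eigenvalues on ℓ²(V): there exist no λ ∈ ℂ and no nonzero f ∈ ℓ²(V) such that Λ_T f = λ f pointwise on V. In particular, when Λ_T defines a bounded operator C_T on ℓ²(V), the point spectrum of C_T is empty. -/
/-!
An eigenfunction satisfies `(λ (dep v + 1) - 1) f v = λ dep v f (par v)`. At a vertex `v` of least
depth `n` in its support the right-hand side vanishes, so `λ = 1 / (n + 1)`. Along any ray
`v = v₀, v₁, v₂, …` of successive children the relation becomes
`(k + 1) f vₖ₊₁ = (n + k + 1) f vₖ`, so `f vₖ = (n + k).choose k * f v` does not tend to `0`.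
-/

noncomputable section

open scoped ENNReal

open Filter Function Topology

theorem tendsto_norm_cofinite_zero_of_memℓp {ι : Type*} {E : ι → Type*}
    [∀ i, NormedAddCommGroup (E i)] {p : ℝ≥0∞} (hp : p ≠ ∞) {f : ∀ i, E i} (hf : Memℓp f p) :
    Tendsto (fun i ↦ ‖f i‖) cofinite (𝓝 0) := by
  -- Raising the exponent to `max p 1` also covers `p = 0`, where `Memℓp` means finite support.
  have hq : 0 < (max p 1).toReal := ENNReal.toReal_pos (by simp) (by simp [hp])
  have hsum : Summable fun i ↦ ‖f i‖ ^ (max p 1).toReal :=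
    (hf.of_exponent_ge (le_max_left p 1)).summable hq
  simpa [← Real.rpow_mul, hq.ne'] using
    hsum.tendsto_cofinite_zero.rpow_const (p := (max p 1).toReal⁻¹) (.inr (by positivity))

namespace TreeData

variable {V : Type} (T : TreeData V)

section Depth

theorem dep_root : T.dep T.root = 0 := by
  simp [dep]

variable {T}

open scoped Classical in
theorem dep_eq_dep_par_add_one {v : V} (hv : v ≠ T.root) : T.dep v = T.dep (T.par v) + 1 :=
  Nat.find_comp_succ (T.hroot v) (T.hroot (T.par v)) hv

theorem dep_eq_add_one_of_mem_chi {u v : V} (hv : v ∈ T.chi u) : T.dep v = T.dep u + 1 := by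
  rw [dep_eq_dep_par_add_one hv.1, hv.2]

variable {c : V → V} (hc : ∀ u, c u ∈ T.chi u)
include hc

theorem dep_iterate_child (v : V) (k : ℕ) : T.dep (c^[k] v) = T.dep v + k := by
  induction k with
  | zero => rfl
  | succ k ih => rw [iterate_succ_apply', dep_eq_add_one_of_mem_chi (hc _), ih, add_assoc]

theorem injective_iterate_child (v : V) : Injective fun k ↦ c^[k] v := by
  intro i j hij
  have hdep : T.dep (c^[i] v) = T.dep (c^[j] v) := congrArg T.dep hij
  simpa only [dep_iterate_child hc, add_right_inj] using hdep

end Depth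

theorem dep_add_one_mul_cesaro_eq_sum (f : V → ℂ) (v : V) :
    ((T.dep v : ℂ) + 1) * T.cesaro f v = ∑ j ∈ Finset.range (T.dep v + 1), f (T.par^[j] v) :=
  mul_inv_cancel_left₀ (Nat.cast_add_one_ne_zero _) _

theorem dep_add_one_mul_cesaro (f : V → ℂ) (v : V) :
    ((T.dep v : ℂ) + 1) * T.cesaro f v = f v + T.dep v * T.cesaro f (T.par v) := by
  rcases eq_or_ne v T.root with rfl | hv
  · simp [cesaro, dep_root]
  · rw [dep_add_one_mul_cesaro_eq_sum, Finset.sum_range_succ', dep_eq_dep_par_add_one hv,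
      Nat.cast_succ, dep_add_one_mul_cesaro_eq_sum, add_comm]
    rfl

section Eigenfunction

variable {T} {lam : ℂ} {f : V → ℂ} (h : ∀ v, T.cesaro f v = lam * f v)
include h

theorem mul_apply_eq_mul_apply_par_of_cesaro_eq (v : V) :
    (lam * (T.dep v + 1) - 1) * f v = lam * T.dep v * f (T.par v) := by
  have hrec := T.dep_add_one_mul_cesaro f v
  rw [h, h] at hrec
  linear_combination hrec

theorem exists_apply_ne_zero_and_mul_dep_add_one_eq_one_of_cesaro_eq (hf : f ≠ 0) :
    ∃ v, f v ≠ 0 ∧ lam * (T.dep v + 1) = 1 := by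
  obtain ⟨v, hv, hmin⟩ := exists_minimalFor_of_wellFoundedLT (f · ≠ 0) T.dep (ne_iff.mp hf)
  have hpar : (T.dep v : ℂ) * f (T.par v) = 0 := by
    rcases eq_or_ne v T.root with rfl | hroot
    · simp [dep_root]
    · have hdep : T.dep (T.par v) < T.dep v := by simp [dep_eq_dep_par_add_one hroot]
      have hzero : f (T.par v) = 0 := by
        by_contra hne
        exact hdep.not_ge (hmin hne hdep.le)
      rw [hzero, mul_zero]
  have hprod : (lam * (T.dep v + 1) - 1) * f v = 0 := by
    rw [mul_apply_eq_mul_apply_par_of_cesaro_eq h, mul_assoc, hpar, mul_zero]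
  exact ⟨v, hv, sub_eq_zero.mp ((mul_eq_zero_iff_right hv).mp hprod)⟩

section Ray

variable {c : V → V} (hc : ∀ u, c u ∈ T.chi u) {v : V} (hv : lam * (T.dep v + 1) = 1) (k : ℕ)
include hc hv

theorem add_one_mul_apply_iterate_child_succ_of_cesaro_eq :
    ((k : ℂ) + 1) * f (c^[k + 1] v) = (T.dep v + k + 1) * f (c^[k] v) := by
  have hrec := mul_apply_eq_mul_apply_par_of_cesaro_eq h (c^[k + 1] v)
  have hpar : T.par (c^[k + 1] v) = c^[k] v := by rw [iterate_succ_apply', (hc _).2]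
  rw [dep_iterate_child hc, hpar] at hrec
  push_cast at hrec
  linear_combination (T.dep v + 1 : ℂ) * hrec -
    ((T.dep v + k + 2) * f (c^[k + 1] v) - (T.dep v + k + 1) * f (c^[k] v)) * hv

theorem apply_iterate_child_of_cesaro_eq :
    f (c^[k] v) = (T.dep v + k).choose k * f v := by
  induction k with
  | zero => simp
  | succ k ih =>
    have hstep := add_one_mul_apply_iterate_child_succ_of_cesaro_eq h hc hv k
    have hchoose : ((T.dep v : ℂ) + k + 1) * (T.dep v + k).choose k =
        (T.dep v + (k + 1)).choose (k + 1) * (k + 1) :=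
      mod_cast Nat.add_one_mul_choose_eq (T.dep v + k) k
    refine mul_left_cancel₀ (Nat.cast_add_one_ne_zero k) ?_
    rw [hstep, ih, ← mul_assoc, hchoose]
    ring

theorem norm_apply_le_norm_apply_iterate_child_of_cesaro_eq : ‖f v‖ ≤ ‖f (c^[k] v)‖ := by
  have hone : (1 : ℝ) ≤ (T.dep v + k).choose k :=
    mod_cast Nat.choose_pos (Nat.le_add_left k (T.dep v))
  rw [apply_iterate_child_of_cesaro_eq h hc hv, norm_mul, Complex.norm_natCast]
  exact le_mul_of_one_le_left (norm_nonneg _) hone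

end Ray

end Eigenfunction

end TreeData

theorem cesaro_no_eigenvalues_general {V : Type} (T : TreeData V)
    (hleafless : ∀ u : V, (T.chi u).Nonempty) {lam : ℂ} {f : V → ℂ}
    (hf : Tendsto f cofinite (𝓝 0)) (h : ∀ v : V, T.cesaro f v = lam * f v) : f = 0 := by
  by_contra hne
  obtain ⟨v, hv, hlam⟩ :=
    TreeData.exists_apply_ne_zero_and_mul_dep_add_one_eq_one_of_cesaro_eq h hne
  choose c hc using hleafless
  have hray : Tendsto (fun k ↦ c^[k] v) atTop cofinite :=
    Nat.cofinite_eq_atTop ▸ (TreeData.injective_iterate_child hc v).tendsto_cofinite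
  have hle : ‖f v‖ ≤ 0 := ge_of_tendsto' (tendsto_zero_iff_norm_tendsto_zero.mp (hf.comp hray))
    (TreeData.norm_apply_le_norm_apply_iterate_child_of_cesaro_eq h hc hlam)
  exact hv (norm_le_zero_iff.mp hle)

/-- For a leafless, locally finite rooted directed tree, the Cesàro map has
no eigenvalues on `ℓ²(V)`; in particular, the point spectrum of the Cesàro operator `C_T`
(when it is bounded) is empty. -/
theorem cesaro_no_eigenvalues {V : Type} [Countable V] [Infinite V]
    (T : TreeData V)
    (hleafless : ∀ u : V, (T.chi u).Nonempty)
    (hlocfin : ∀ u : V, (T.chi u).Finite) :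
    (∀ (lam : ℂ) (f : L2 V), (∀ v : V, T.cesaro ⇑f v = lam * f v) → f = 0) ∧
    ∀ C : L2 V →L[ℂ] L2 V, (∀ (f : L2 V) (v : V), C f v = T.cesaro ⇑f v) →
      ∀ lam : ℂ, ¬ Module.End.HasEigenvalue (C : L2 V →ₗ[ℂ] L2 V) lam := by
  have eq_zero (lam : ℂ) (f : L2 V) (h : ∀ v : V, T.cesaro ⇑f v = lam * f v) : f = 0 :=
    lp.eq_zero_iff_coeFn_eq_zero.mpr <| cesaro_no_eigenvalues_general T hleafless
      (tendsto_zero_iff_norm_tendsto_zero.mpr <|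
        tendsto_norm_cofinite_zero_of_memℓp ENNReal.ofNat_ne_top (lp.memℓp f)) h
  refine ⟨eq_zero, fun C hC lam hlam ↦ ?_⟩
  obtain ⟨f, hf⟩ := hlam.exists_hasEigenvector
  have hCf : C f = lam • f := hf.apply_eq_smul
  exact hf.2 (eq_zero lam f fun v ↦ by rw [← hC, hCf, lp.coeFn_smul, Pi.smul_apply, smul_eq_mul])
end
end

section
/- Let T = (V, root, par) be a narrow rooted directed tree admitting two distinct paths, i.e. two sequences (v_n)_{n≥0} and (w_n)_{n≥0} with v_0 = w_0 = root, v_{n+1} ∈ Chi(v_n), w_{n+1} ∈ Chi(w_n) for all n, and v_n ≠ w_n for some n. Then for every λ ∈ ℂ with 0 < |λ − 1| < 1, the eigenspace ker(C_T* − λ·I) of the adjoint of the bounded Cesàro operator C_T has dimension at least 2. -/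
noncomputable section

open scoped ENNReal

/-!
Along a path `p`, the functional `f ↦ (C_T f)(p n)` only sees the values `f (p 0), …, f (p n)`, so
`C_T*` maps the functions supported on `p` to themselves, acting as the adjoint of the classical
Cesàro operator: it sends `a` to the sequence `b` with `b k - b (k + 1) = a k / (k + 1)` and
`b → 0`. Hence the products `b n = ∏_{j < n} (1 - 1 / (λ (j + 1)))` placed on a path form an
eigenvector; they are square-summable because `|λ - 1| < 1` means `1 < 2 Re (1 / λ)`. If two paths
first differ at level `K`, a second eigenvector is obtained by starting the product at level `K` on
both paths and subtracting: the part of the eigenvalue equation that fails below level `K` is the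
same on both paths and cancels. It vanishes at the root and takes the value `1` on the first path
at level `K`, which separates it from the first eigenvector even when the full products vanish
from some level on (as they do for `λ = 1 / (j + 1)`).
-/

open Filter Topology InnerProductSpace

section Sequences

theorem summable_of_raabe {b : ℕ → ℝ} {t : ℝ} (ht : 1 < t) (hb : ∀ n, 0 ≤ b n)
    (h : ∀ᶠ n : ℕ in atTop, b (n + 1) * (n + 1) ≤ b n * (n + 1 - t)) : Summable b := by
  obtain ⟨N, hN⟩ := eventually_atTop.1 h
  rw [← summable_nat_add_iff N]
  refine summable_of_sum_range_le (c := N * b N / (t - 1)) (fun n => hb _) fun n => ?_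
  have telescoped : (t - 1) * ∑ i ∈ Finset.range n, b (i + N) ≤
      N * b N - (n + N : ℝ) * b (n + N) := by
    induction n with
    | zero => simp
    | succ k ih =>
      have hk := hN (k + N) (by omega)
      rw [Finset.sum_range_succ, mul_add, Nat.add_right_comm]
      push_cast at hk ⊢
      linarith
  have last_nonneg : 0 ≤ (n + N : ℝ) * b (n + N) := mul_nonneg (by positivity) (hb _)
  rw [le_div_iff₀ (by linarith)]
  linarith

theorem eq_of_sub_succ_eq_of_tendsto {G : Type*} [AddCommGroup G] [TopologicalSpace G]
    [IsTopologicalAddGroup G] [T2Space G] {x y : ℕ → G} {l : G}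
    (h : ∀ k, x k - x (k + 1) = y k - y (k + 1))
    (hx : Tendsto x atTop (𝓝 l)) (hy : Tendsto y atTop (𝓝 l)) : x = y := by
  have sub_const : ∀ k, x k - y k = x 0 - y 0 := by
    intro k
    induction k with
    | zero => rfl
    | succ k ih => rw [← ih, sub_eq_sub_iff_sub_eq_sub, ← neg_inj, neg_sub, neg_sub, h k]
  have lim_sub : Tendsto (fun k => x k - y k) atTop (𝓝 0) := by simpa using hx.sub hy
  funext k
  rw [← sub_eq_zero, sub_const k]
  exact tendsto_nhds_unique (tendsto_const_nhds.congr fun n => (sub_const n).symm) lim_sub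

theorem one_lt_two_mul_re_inv {lam : ℂ} (h : ‖lam - 1‖ < 1) : 1 < 2 * (lam⁻¹).re := by
  have lam_ne : lam ≠ 0 := by rintro rfl; simp at h
  have sq_lt : ‖lam - 1‖ ^ 2 < 1 := (sq_lt_one_iff₀ (norm_nonneg _)).2 h
  rw [Complex.sq_norm, Complex.normSq_sub] at sq_lt
  rw [Complex.inv_re, ← mul_div_assoc, lt_div_iff₀ (Complex.normSq_pos.2 lam_ne)]
  simp only [map_one, mul_one] at sq_lt
  linarith

theorem sq_norm_one_sub_div_mul (z : ℂ) {x : ℝ} (hx : x ≠ 0) :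
    ‖1 - z / x‖ ^ 2 * x = x - 2 * z.re + ‖z‖ ^ 2 / x := by
  rw [Complex.sq_norm, Complex.sq_norm, Complex.normSq_sub]
  simp only [map_one, map_div₀, Complex.normSq_ofReal, Complex.conj_ofReal, one_mul,
    Complex.div_ofReal_re, Complex.conj_re]
  field_simp
  ring

/-- The sequence `1, …, 1, 1 - z / (K + 1), …` solving, for `n ≥ K`, the eigenvalue equation of the
adjoint of the classical Cesàro operator at the eigenvalue `z⁻¹`. -/
def cesaroProd (z : ℂ) (K n : ℕ) : ℂ := ∏ j ∈ Finset.Ico K n, (1 - z / (j + 1))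

theorem cesaroProd_of_le (z : ℂ) {K n : ℕ} (h : n ≤ K) : cesaroProd z K n = 1 := by
  simp [cesaroProd, h]

theorem cesaroProd_succ (z : ℂ) {K n : ℕ} (h : K ≤ n) :
    cesaroProd z K (n + 1) = cesaroProd z K n * (1 - z / (n + 1)) :=
  Finset.prod_Ico_succ_top h _

theorem summable_sq_norm_cesaroProd {z : ℂ} (hz : 1 < 2 * z.re) (K : ℕ) :
    Summable fun n => ‖cesaroProd z K n‖ ^ 2 := by
  obtain ⟨t, one_lt_t, t_lt⟩ := exists_between hz
  refine summable_of_raabe one_lt_t (fun n => by positivity) ?_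
  have lim : Tendsto (fun n : ℕ => ‖z‖ ^ 2 / ((n + 1 : ℕ) : ℝ)) atTop (𝓝 0) :=
    (tendsto_const_div_atTop_nhds_zero_nat _).comp (tendsto_add_atTop_nat 1)
  filter_upwards [eventually_ge_atTop K, lim.eventually_le_const (sub_pos.2 t_lt)]
    with n K_le remainder_le
  have factor_le : ‖1 - z / (n + 1)‖ ^ 2 * (n + 1) ≤ n + 1 - t := by
    have expand := sq_norm_one_sub_div_mul z (x := ((n + 1 : ℕ) : ℝ)) (by positivity)
    push_cast at expand remainder_le
    linarith
  rw [cesaroProd_succ z K_le, norm_mul, mul_pow, mul_assoc]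
  gcongr

end Sequences

section SquareSummable

variable {ι V : Type}

theorem memℓp_two_iff {f : V → ℂ} :
    Memℓp (E := fun _ : V => ℂ) f 2 ↔ Summable fun u => ‖f u‖ ^ 2 := by
  simpa using memℓp_gen_iff (E := fun _ : V => ℂ) (p := 2) (by norm_num)

theorem tendsto_cofinite_zero_of_L2 (f : L2 V) : Tendsto f cofinite (𝓝 0) := by
  rw [tendsto_zero_iff_norm_tendsto_zero]
  simpa using (memℓp_two_iff.1 (lp.memℓp f)).tendsto_cofinite_zero.sqrt

theorem adjoint_apply_eq_inner [DecidableEq V] (A : L2 V →L[ℂ] L2 V) (g : L2 V) (u : V) :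
    A.adjoint g u = ⟪A (lp.single 2 u 1), g⟫_ℂ := by
  rw [← ContinuousLinearMap.adjoint_inner_right, lp.inner_single_left]
  simp

theorem linearIndependent_pair_of_apply {x y : L2 V} {i j : V}
    (hxi : x i ≠ 0) (hyi : y i = 0) (hyj : y j ≠ 0) : LinearIndependent ℂ ![x, y] := by
  rw [LinearIndependent.pair_iff]
  intro s t h
  have eval : ∀ u, s * x u + t * y u = 0 := fun u => congrArg (fun f : L2 V => f u) h
  have hs : s = 0 := by simpa [hyi, hxi] using eval i
  exact ⟨hs, by simpa [hs, hyj] using eval j⟩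

theorem two_le_rank_of_linearIndependent_pair {R M : Type*} [Ring R] [Nontrivial R]
    [AddCommGroup M] [Module R M] {S : Submodule R M} {x y : M} (hx : x ∈ S) (hy : y ∈ S)
    (h : LinearIndependent R ![x, y]) : 2 ≤ Module.rank R S := by
  rw [LinearIndependent.pair_iff] at h
  have indep : LinearIndependent R ![(⟨x, hx⟩ : S), ⟨y, hy⟩] :=
    LinearIndependent.pair_iff.2 fun s t hst => h s t (congrArg Subtype.val hst)
  exact_mod_cast Module.le_rank_iff.2 ⟨_, indep⟩

theorem memℓp_extend_zero {p : ι → V} (hp : p.Injective) (a : L2 ι) :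
    Memℓp (E := fun _ : V => ℂ) (Function.extend p a 0) 2 := by
  rw [memℓp_two_iff, ← hp.summable_iff]
  · simpa [Function.comp_def, hp.extend_apply] using memℓp_two_iff.1 (lp.memℓp a)
  · intro u hu
    simp [Function.extend_apply' _ _ _ hu]

/-- Extension by zero of square-summable families along an injection. -/
def extendL2 (p : ι → V) (hp : p.Injective) : L2 ι →ₗ[ℂ] L2 V where
  toFun a := ⟨Function.extend p a 0, memℓp_extend_zero hp a⟩
  map_add' a b := Subtype.ext <| (Function.ExtendByZero.linearMap ℂ p).map_add a b
  map_smul' c a := Subtype.ext <| (Function.ExtendByZero.linearMap ℂ p).map_smul c a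

variable {p : ι → V} (hp : p.Injective)

theorem extendL2_apply (a : L2 ι) (i : ι) : extendL2 p hp a (p i) = a i :=
  hp.extend_apply _ _ _

theorem extendL2_of_notMem_range (a : L2 ι) {u : V} (hu : u ∉ Set.range p) :
    extendL2 p hp a u = 0 :=
  Function.extend_apply' _ _ _ hu

theorem extendL2_single [DecidableEq ι] [DecidableEq V] (i : ι) (c : ℂ) :
    extendL2 p hp (lp.single 2 i c) = lp.single 2 (p i) c := by
  ext u
  by_cases hu : u ∈ Set.range p
  · obtain ⟨j, rfl⟩ := hu
    simp [extendL2_apply, Pi.single_apply, hp.eq_iff]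
  · rw [extendL2_of_notMem_range hp _ hu, lp.single_apply_ne]
    rintro rfl
    exact hu ⟨i, rfl⟩

theorem inner_extendL2_right (f : L2 V) (a : L2 ι) :
    ⟪f, extendL2 p hp a⟫_ℂ = ∑' i, ⟪f (p i), a i⟫_ℂ := by
  rw [lp.inner_eq_tsum, ← hp.tsum_eq]
  · simp only [extendL2_apply]
  · refine Function.support_subset_iff'.2 fun u hu => ?_
    rw [extendL2_of_notMem_range hp a hu, inner_zero_right]

end SquareSummable

/-- The sequence `cesaroProd z K` as an element of `ℓ²(ℕ)`. -/
def cesaroVec {z : ℂ} (hz : 1 < 2 * z.re) (K : ℕ) : L2 ℕ :=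
  ⟨cesaroProd z K, memℓp_two_iff.2 (summable_sq_norm_cesaroProd hz K)⟩

theorem cesaroVec_apply_of_le {z : ℂ} (hz : 1 < 2 * z.re) {K n : ℕ} (h : n ≤ K) :
    cesaroVec hz K n = 1 :=
  cesaroProd_of_le z h

/-- The indicator of `{0, …, K - 1}` as an element of `ℓ²(ℕ)`; subtracting it from `cesaroVec hz K`
removes the constant part below `K`. -/
def initialOnes (K : ℕ) : L2 ℕ := ∑ n ∈ Finset.range K, lp.single 2 n 1

theorem initialOnes_apply (K n : ℕ) : initialOnes K n = if n < K then 1 else 0 := by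
  simp only [initialOnes, lp.coeFn_sum, Finset.sum_apply, lp.coeFn_single, Finset.sum_pi_single,
    Finset.mem_range]

theorem extendL2_initialOnes_congr {V : Type} {p q : ℕ → V} (hp : p.Injective)
    (hq : q.Injective) {K : ℕ} (h : ∀ n < K, p n = q n) :
    extendL2 p hp (initialOnes K) = extendL2 q hq (initialOnes K) := by
  classical
  simp only [initialOnes, map_sum, extendL2_single]
  exact Finset.sum_congr rfl fun n hn => by rw [h n (Finset.mem_range.1 hn)]

theorem cesaroVec_sub_succ {lam : ℂ} (hlam : 1 < 2 * (lam⁻¹).re) (K k : ℕ) :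
    (lam • cesaroVec hlam K) k - (lam • cesaroVec hlam K) (k + 1) =
      (cesaroVec hlam K - initialOnes K) k / (k + 1) := by
  have lam_ne : lam ≠ 0 := by rintro rfl; norm_num at hlam
  change lam * cesaroProd lam⁻¹ K k - lam * cesaroProd lam⁻¹ K (k + 1) =
    (cesaroProd lam⁻¹ K k - initialOnes K k) / (k + 1)
  rw [initialOnes_apply]
  rcases lt_or_ge k K with hk | hk
  · simp [cesaroProd_of_le _ hk.le, cesaroProd_of_le _ hk, hk]
  · rw [cesaroProd_succ _ hk, if_neg hk.not_gt]
    field_simp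
    ring

namespace TreeData

variable {V : Type} {T : TreeData V}

/-- A path of the tree, given by its sequence of vertices. -/
structure IsPath (T : TreeData V) (p : ℕ → V) : Prop where
  zero : p 0 = T.root
  succ : ∀ n, p (n + 1) ∈ T.chi (p n)

/-- `C` is the Cesàro operator `C_T`, that is, the operator induced by `Λ_T` on `ℓ²(V)`. -/
structure IsCesaroOperator (T : TreeData V) (C : L2 V →L[ℂ] L2 V) : Prop where
  apply : ∀ (f : L2 V) (u : V), C f u = T.cesaro f u

namespace IsPath

variable {p q : ℕ → V}

theorem iterate_par (hp : T.IsPath p) (n k : ℕ) : T.par^[k] (p (n + k)) = p n := by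
  induction k with
  | zero => rfl
  | succ k ih => rw [Function.iterate_succ_apply, ← add_assoc, (hp.succ (n + k)).2, ih]

theorem dep_apply (hp : T.IsPath p) (n : ℕ) : T.dep (p n) = n := by
  classical
  rw [dep, Nat.find_eq_iff]
  constructor
  · simpa [hp.zero] using hp.iterate_par 0 n
  · intro k hk
    obtain ⟨j, rfl⟩ : ∃ j, n = j + 1 + k := ⟨n - k - 1, by omega⟩
    rw [hp.iterate_par]
    exact (hp.succ j).1

theorem index_eq (hp : T.IsPath p) (hq : T.IsPath q) {i j : ℕ} (h : p i = q j) : i = j := by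
  rw [← hp.dep_apply i, h, hq.dep_apply j]

theorem injective (hp : T.IsPath p) : p.Injective := fun _ _ => hp.index_eq hp

theorem notMem_range (hp : T.IsPath p) (hq : T.IsPath q) {n : ℕ} (h : p n ≠ q n) :
    p n ∉ Set.range q := by
  rintro ⟨j, hj⟩
  obtain rfl := hq.index_eq hp hj
  exact h hj.symm

theorem cesaro_apply (hp : T.IsPath p) (f : V → ℂ) (n : ℕ) :
    T.cesaro f (p n) = ((n : ℂ) + 1)⁻¹ * ∑ j ∈ Finset.range (n + 1), f (p j) := by
  rw [cesaro, hp.dep_apply, ← Finset.sum_range_reflect (fun j => f (p j))]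
  congr 1
  refine Finset.sum_congr rfl fun j hj => ?_
  have ancestor := hp.iterate_par (n - j) j
  rw [Nat.sub_add_cancel (Finset.mem_range_succ_iff.1 hj)] at ancestor
  rw [ancestor, Nat.add_sub_cancel]

theorem cesaro_single [DecidableEq V] (hp : T.IsPath p) (k n : ℕ) :
    T.cesaro (Pi.single (p k) 1) (p n) = if k ≤ n then ((n : ℂ) + 1)⁻¹ else 0 := by
  simp [hp.cesaro_apply, Pi.single_apply, hp.injective.eq_iff]

theorem cesaro_single_of_notMem_range [DecidableEq V] (hp : T.IsPath p) {u : V}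
    (hu : u ∉ Set.range p) (n : ℕ) : T.cesaro (Pi.single u 1) (p n) = 0 := by
  rw [hp.cesaro_apply, Finset.sum_eq_zero, mul_zero]
  exact fun j _ => Pi.single_eq_of_ne (fun h => hu ⟨j, h⟩) _

section Adjoint

variable {C : L2 V →L[ℂ] L2 V}

theorem adjoint_extendL2_of_notMem_range (hp : T.IsPath p) (hC : T.IsCesaroOperator C)
    (a : L2 ℕ) {u : V} (hu : u ∉ Set.range p) :
    C.adjoint (extendL2 p hp.injective a) u = 0 := by
  classical
  simp only [adjoint_apply_eq_inner, inner_extendL2_right, hC.apply, lp.coeFn_single,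
    hp.cesaro_single_of_notMem_range hu, inner_zero_left, tsum_zero]

theorem adjoint_extendL2_sub_succ (hp : T.IsPath p) (hC : T.IsCesaroOperator C)
    (a : L2 ℕ) (k : ℕ) :
    C.adjoint (extendL2 p hp.injective a) (p k) -
        C.adjoint (extendL2 p hp.injective a) (p (k + 1)) = a k / (k + 1) := by
  classical
  have single_sub (n : ℕ) : (C (lp.single 2 (p k) 1) - C (lp.single 2 (p (k + 1)) 1)) (p n) =
      if n = k then ((k : ℂ) + 1)⁻¹ else 0 := by
    rw [lp.coeFn_sub, Pi.sub_apply, hC.apply, hC.apply, lp.coeFn_single, lp.coeFn_single,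
      hp.cesaro_single, hp.cesaro_single]
    rcases lt_trichotomy n k with h | rfl | h
    · simp [h.ne, h.not_ge, (h.trans k.lt_succ_self).not_ge]
    · simp
    · simp [h.ne', h.le, Nat.succ_le_of_lt h]
  rw [adjoint_apply_eq_inner, adjoint_apply_eq_inner, ← inner_sub_left, inner_extendL2_right,
    tsum_eq_single k fun n hn => by rw [single_sub, if_neg hn, inner_zero_left], single_sub,
    if_pos rfl]
  simp [div_eq_mul_inv]

theorem adjoint_extendL2_eq (hp : T.IsPath p) (hC : T.IsCesaroOperator C) {a b : L2 ℕ}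
    (h : ∀ k, b k - b (k + 1) = a k / (k + 1)) :
    C.adjoint (extendL2 p hp.injective a) = extendL2 p hp.injective b := by
  ext u
  by_cases hu : u ∈ Set.range p
  · obtain ⟨k, rfl⟩ := hu
    rw [extendL2_apply]
    refine congrFun (eq_of_sub_succ_eq_of_tendsto (l := 0)
      (x := fun k => C.adjoint (extendL2 p hp.injective a) (p k)) (fun k => ?_) ?_ ?_) k
    · rw [hp.adjoint_extendL2_sub_succ hC, h]
    · rw [← Nat.cofinite_eq_atTop]
      exact (tendsto_cofinite_zero_of_L2 _).comp hp.injective.tendsto_cofinite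
    · rw [← Nat.cofinite_eq_atTop]
      exact tendsto_cofinite_zero_of_L2 b
  · rw [hp.adjoint_extendL2_of_notMem_range hC a hu, extendL2_of_notMem_range _ _ hu]

theorem adjoint_extendL2_cesaroVec (hp : T.IsPath p) (hC : T.IsCesaroOperator C)
    {lam : ℂ} (hlam : 1 < 2 * (lam⁻¹).re) (K : ℕ) :
    C.adjoint (extendL2 p hp.injective (cesaroVec hlam K - initialOnes K)) =
      lam • extendL2 p hp.injective (cesaroVec hlam K) := by
  rw [hp.adjoint_extendL2_eq hC (cesaroVec_sub_succ hlam K), map_smul]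

theorem extendL2_cesaroVec_mem_eigenspace (hp : T.IsPath p) (hC : T.IsCesaroOperator C)
    {lam : ℂ} (hlam : 1 < 2 * (lam⁻¹).re) :
    extendL2 p hp.injective (cesaroVec hlam 0) ∈
      Module.End.eigenspace (C.adjoint : L2 V →ₗ[ℂ] L2 V) lam := by
  simpa [Module.End.mem_eigenspace_iff, initialOnes] using
    hp.adjoint_extendL2_cesaroVec hC hlam 0

theorem extendL2_cesaroVec_sub_mem_eigenspace (hp : T.IsPath p) (hq : T.IsPath q)
    (hC : T.IsCesaroOperator C) {lam : ℂ} (hlam : 1 < 2 * (lam⁻¹).re)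
    {K : ℕ} (hK : ∀ n < K, p n = q n) :
    extendL2 p hp.injective (cesaroVec hlam K) - extendL2 q hq.injective (cesaroVec hlam K) ∈
      Module.End.eigenspace (C.adjoint : L2 V →ₗ[ℂ] L2 V) lam := by
  have truncate : extendL2 p hp.injective (cesaroVec hlam K) -
        extendL2 q hq.injective (cesaroVec hlam K) =
      extendL2 p hp.injective (cesaroVec hlam K - initialOnes K) -
        extendL2 q hq.injective (cesaroVec hlam K - initialOnes K) := by
    rw [map_sub, map_sub, extendL2_initialOnes_congr hp.injective hq.injective hK,
      sub_sub_sub_cancel_right]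
  rw [Module.End.mem_eigenspace_iff, smul_sub, ← hp.adjoint_extendL2_cesaroVec hC,
    ← hq.adjoint_extendL2_cesaroVec hC, ← map_sub C.adjoint, ← truncate]
  rfl

end Adjoint

end IsPath

end TreeData

theorem adjoint_cesaro_eigenspace_dim_ge_two_general {V : Type} {T : TreeData V} {v w : ℕ → V}
    (hv : T.IsPath v) (hw : T.IsPath w) (hvw : ∃ n : ℕ, v n ≠ w n) {C : L2 V →L[ℂ] L2 V}
    (hC : T.IsCesaroOperator C) {lam : ℂ} (hlam : ‖lam - 1‖ < 1) :
    2 ≤ Module.rank ℂ (Module.End.eigenspace (C.adjoint : L2 V →ₗ[ℂ] L2 V) lam) := by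
  classical
  obtain ⟨K, hK, hlt⟩ : ∃ K, v K ≠ w K ∧ ∀ n < K, v n = w n :=
    ⟨Nat.find hvw, Nat.find_spec hvw, fun n hn => not_not.1 (Nat.find_min hvw hn)⟩
  have hz := one_lt_two_mul_re_inv hlam
  let x : L2 V := extendL2 v hv.injective (cesaroVec hz 0)
  let y : L2 V := extendL2 v hv.injective (cesaroVec hz K) -
    extendL2 w hw.injective (cesaroVec hz K)
  have x_root : x (v 0) = 1 := by rw [extendL2_apply, cesaroVec_apply_of_le hz le_rfl]
  have y_root : y (v 0) = 0 := by
    rw [lp.coeFn_sub, Pi.sub_apply, extendL2_apply, hv.zero, ← hw.zero, extendL2_apply, sub_self]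
  have y_branch : y (v K) = 1 := by
    rw [lp.coeFn_sub, Pi.sub_apply, extendL2_apply, cesaroVec_apply_of_le hz le_rfl,
      extendL2_of_notMem_range _ _ (hv.notMem_range hw hK), sub_zero]
  exact two_le_rank_of_linearIndependent_pair
    (hv.extendL2_cesaroVec_mem_eigenspace hC hz)
    (hv.extendL2_cesaroVec_sub_mem_eigenspace hw hC hz hlt)
    (linearIndependent_pair_of_apply (ne_of_eq_of_ne x_root one_ne_zero) y_root
      (ne_of_eq_of_ne y_branch one_ne_zero))

/-- If a narrow rooted directed tree admits two distinct paths, then for every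
`λ` with `0 < |λ - 1| < 1`, the eigenspace `ker(C_T* - λ I)` has dimension at least `2`. -/
theorem adjoint_cesaro_eigenspace_dim_ge_two {V : Type} [Countable V] [Infinite V]
    (T : TreeData V) (m : ℕ) (hm : ∀ n : ℕ, (T.level n).encard ≤ m)
    (v w : ℕ → V) (hv0 : v 0 = T.root) (hw0 : w 0 = T.root)
    (hv : ∀ n : ℕ, v (n + 1) ∈ T.chi (v n)) (hw : ∀ n : ℕ, w (n + 1) ∈ T.chi (w n))
    (hvw : ∃ n : ℕ, v n ≠ w n)
    (C : L2 V →L[ℂ] L2 V) (hC : ∀ (f : L2 V) (u : V), C f u = T.cesaro ⇑f u)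
    (lam : ℂ) (hlam0 : 0 < ‖lam - 1‖) (hlam1 : ‖lam - 1‖ < 1) :
    2 ≤ Module.rank ℂ
      ↥(LinearMap.ker ((ContinuousLinearMap.adjoint C : L2 V →ₗ[ℂ] L2 V) - lam • 1)) := by
  rw [← Module.End.eigenspace_def]
  exact adjoint_cesaro_eigenspace_dim_ge_two_general ⟨hv0, hv⟩ ⟨hw0, hw⟩ hvw ⟨hC⟩ hlam1
end
end

section
/- Fix a positive integer k. The map sending x ∈ ℓ²(ℕ) to the sequence m ↦ (k/((k+m+1)(m+1))) · Σ_{n=0}^{m} x(n) defines a bounded linear operator A on ℓ²(ℕ), and A is a compact operator. Equivalently, the lower-triangular matrix with entries a_{m,n} = k/((k+m+1)(m+1)) for m ≥ n and a_{m,n} = 0 for m < n defines a compact operator on ℓ²(ℕ). -/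
noncomputable section

open scoped ENNReal

/-!
If the norms of the rows `T i` of an operator into `ℓᵖ` are `p`-summable, with `p < ∞`, then the
operator is the norm limit of its finite row truncations, so it is compact as soon as every row is.
For the triangular operator, row `m` is a scalar `a m` times the sum of the first `m + 1`
coordinates. By Hölder that sum has norm at most `(m + 1) ^ (1 - 1 / p)`, whereas the given
`a m` is of order `1 / m ^ 2`, so the row norms are `p`-summable.
-/

section Rows

variable {𝕜 ι E : Type*} {G : ι → Type*} {p : ℝ≥0∞}
  [NontriviallyNormedField 𝕜] [NormedAddCommGroup E] [NormedSpace 𝕜 E]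
  [∀ i, NormedAddCommGroup (G i)] [∀ i, NormedSpace 𝕜 (G i)]

lemma memℓp_clm_apply (T : lp (fun i ↦ E →L[𝕜] G i) p) (x : E) : Memℓp (fun i ↦ T i x) p :=
  ((lp.memℓp T).norm.const_mul ‖x‖).mono fun i ↦ (T i).le_opNorm x |>.trans_eq (mul_comm _ _)

variable [Fact (1 ≤ p)]

variable (𝕜 E G p) in
/-- The `ℓᵖ` analogue of `ContinuousLinearMap.pi`: a `p`-summable family of operators
`T i : E →L[𝕜] G i` is sent to the operator `x ↦ (T i x)ᵢ` from `E` to `ℓᵖ`, whose rows are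
the `T i`. It is itself bundled as a continuous linear map, so that sums of families can be pushed
through it. -/
def lpPi : lp (fun i ↦ E →L[𝕜] G i) p →L[𝕜] E →L[𝕜] lp G p :=
  LinearMap.mkContinuous₂
    (LinearMap.mk₂ 𝕜 (fun T x ↦ (⟨fun i ↦ T i x, memℓp_clm_apply T x⟩ : lp G p))
      (fun _ _ _ ↦ rfl) (fun _ _ _ ↦ rfl)
      (fun T x y ↦ lp.ext <| funext fun i ↦ map_add (T i) x y)
      (fun c T x ↦ lp.ext <| funext fun i ↦ map_smul (T i) c x))
    1 fun T x ↦ by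
      have hp : p ≠ 0 := (zero_lt_one.trans_le Fact.out).ne'
      calc _ ≤ ‖‖x‖ • lp.toNorm T‖ := lp.norm_mono hp fun i ↦ by
            simpa [mul_comm] using! (T i).le_opNorm x
        _ = 1 * ‖T‖ * ‖x‖ := by
            rw [lp.norm_const_smul hp, lp.norm_toNorm, norm_norm, one_mul, mul_comm]

@[simp]
lemma lpPi_apply_apply (T : lp (fun i ↦ E →L[𝕜] G i) p) (x : E) (i : ι) :
    lpPi 𝕜 E G p T x i = T i x :=
  rfl

lemma lpPi_single [DecidableEq ι] (i : ι) (T : E →L[𝕜] G i) :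
    lpPi 𝕜 E G p (lp.single p i T) = lp.singleContinuousLinearMap 𝕜 G p i ∘L T := by
  ext x j
  obtain rfl | hij := eq_or_ne j i
  · simp
  · simp [hij]

lemma isCompactOperator_lpPi [∀ i, CompleteSpace (G i)] (hp : p ≠ ∞)
    {T : lp (fun i ↦ E →L[𝕜] G i) p} (hT : ∀ i, IsCompactOperator (T i)) :
    IsCompactOperator (lpPi 𝕜 E G p T) := by
  classical
  have hsum : HasSum (fun i ↦ lpPi 𝕜 E G p (lp.single p i (T i))) (lpPi 𝕜 E G p T) :=
    (lp.hasSum_single hp T).mapL (lpPi 𝕜 E G p)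
  refine isCompactOperator_of_tendsto hsum (.of_forall fun s ↦ ?_)
  refine (compactOperator (RingHom.id 𝕜) E (lp G p)).sum_mem fun i _ ↦ ?_
  rw [lpPi_single]
  exact (hT i).clm_comp (lp.singleContinuousLinearMap 𝕜 G p i)

end Rows

section CoordinateSums

variable {𝕜 ι E : Type*} {p : ℝ≥0∞} [NormedAddCommGroup E]

lemma norm_sum_apply_rpow_le (hp : 1 ≤ p.toReal) (s : Finset ι) (x : lp (fun _ : ι ↦ E) p) :
    ‖∑ i ∈ s, x i‖ ^ p.toReal ≤ (s.card : ℝ) ^ (p.toReal - 1) * ‖x‖ ^ p.toReal :=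
  calc ‖∑ i ∈ s, x i‖ ^ p.toReal
    _ ≤ (∑ i ∈ s, ‖x i‖) ^ p.toReal := by gcongr; exact norm_sum_le _ _
    _ ≤ (s.card : ℝ) ^ (p.toReal - 1) * ∑ i ∈ s, ‖x i‖ ^ p.toReal :=
        Real.rpow_sum_le_const_mul_sum_rpow_of_nonneg s hp fun i _ ↦ norm_nonneg (x i)
    _ ≤ (s.card : ℝ) ^ (p.toReal - 1) * ‖x‖ ^ p.toReal := by
        gcongr
        exact lp.sum_rpow_le_norm_rpow (by positivity) x s

variable [NontriviallyNormedField 𝕜] [NormedSpace 𝕜 E] [Fact (1 ≤ p)]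

variable (𝕜 E p) in
/-- The operator `x ↦ ∑ i ∈ s, x i` on `ℓᵖ`, summing the coordinates in a finite set `s`. -/
def coordSum (s : Finset ι) : lp (fun _ : ι ↦ E) p →L[𝕜] E :=
  ∑ i ∈ s, lp.evalCLM 𝕜 (fun _ ↦ E) p i

@[simp]
lemma coordSum_apply (s : Finset ι) (x : lp (fun _ : ι ↦ E) p) :
    coordSum 𝕜 E p s x = ∑ i ∈ s, x i :=
  sum_apply _ _ _

lemma norm_coordSum_rpow_le (hp : p ≠ ∞) (s : Finset ι) :
    ‖coordSum 𝕜 E p s‖ ^ p.toReal ≤ (s.card : ℝ) ^ (p.toReal - 1) := by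
  have hp₁ : 1 ≤ p.toReal := p.dichotomy.resolve_left hp
  have hp₀ : 0 < p.toReal := by positivity
  rw [← Real.le_rpow_inv_iff_of_pos (by positivity) (by positivity) hp₀]
  refine ContinuousLinearMap.opNorm_le_bound _ (by positivity) fun x ↦ ?_
  rw [coordSum_apply, ← Real.rpow_le_rpow_iff (by positivity) (by positivity) hp₀,
    Real.mul_rpow (by positivity) (by positivity), Real.rpow_inv_rpow (by positivity) hp₀.ne']
  exact norm_sum_apply_rpow_le hp₁ s x

end CoordinateSums

section Terraced

variable {𝕜 E : Type*} {p : ℝ≥0∞} [Fact (1 ≤ p)]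
  [NontriviallyNormedField 𝕜] [NormedAddCommGroup E] [NormedSpace 𝕜 E]

lemma memℓp_smul_coordSum_range (hp : p ≠ ∞) {a : ℕ → 𝕜}
    (ha : Summable fun m : ℕ ↦ ((m : ℝ) + 1) ^ (p.toReal - 1) * ‖a m‖ ^ p.toReal) :
    Memℓp (fun m ↦ a m • coordSum 𝕜 E p (Finset.range (m + 1))) p := by
  refine memℓp_gen (ha.of_nonneg_of_le (fun m ↦ by positivity) fun m ↦ ?_)
  rw [norm_smul, Real.mul_rpow (by positivity) (by positivity), mul_comm]
  gcongr
  simpa using norm_coordSum_rpow_le (𝕜 := 𝕜) (E := E) hp (Finset.range (m + 1))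

theorem compact_triangular_operator_general [ProperSpace E] (hp : p ≠ ∞) {a : ℕ → 𝕜}
    (ha : Summable fun m : ℕ ↦ ((m : ℝ) + 1) ^ (p.toReal - 1) * ‖a m‖ ^ p.toReal) :
    ∃ A : lp (fun _ : ℕ ↦ E) p →L[𝕜] lp (fun _ : ℕ ↦ E) p,
      (∀ x m, A x m = a m • ∑ n ∈ Finset.range (m + 1), x n) ∧ IsCompactOperator A := by
  refine ⟨lpPi 𝕜 _ _ p ⟨_, memℓp_smul_coordSum_range hp ha⟩, fun x m ↦ by simp, ?_⟩
  exact isCompactOperator_lpPi hp fun m ↦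
    isCompactOperator_of_locallyCompactSpace_dom (a m • coordSum 𝕜 E p (Finset.range (m + 1)))

end Terraced

lemma norm_div_add_nat_mul_le {z : ℂ} (hz : 0 ≤ z.re) (m : ℕ) :
    ‖z / ((z + m + 1) * (m + 1))‖ ≤ ‖z‖ / ((m : ℝ) + 1) ^ 2 := by
  have hre : (m : ℝ) + 1 ≤ ‖z + m + 1‖ := calc
    (m : ℝ) + 1 ≤ (z + m + 1).re := by simpa using hz
    _ ≤ ‖z + m + 1‖ := Complex.re_le_norm _
  have hm : ‖(m : ℂ) + 1‖ = m + 1 := mod_cast Complex.norm_natCast (m + 1)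
  rw [norm_div, norm_mul, hm, sq]
  gcongr

lemma summable_rpow_mul_norm_div_rpow {z : ℂ} (hz : 0 ≤ z.re) {p : ℝ} (hp : 0 < p) :
    Summable fun m : ℕ ↦ ((m : ℝ) + 1) ^ (p - 1) * ‖z / ((z + m + 1) * (m + 1))‖ ^ p := by
  have hsum : Summable fun m : ℕ ↦ ‖z‖ ^ p * ((m : ℝ) + 1) ^ (-(p + 1)) := by
    have := (summable_nat_add_iff 1).2 (Real.summable_nat_rpow.2 (by linarith : -(p + 1) < -1))
    simpa using this.mul_left (‖z‖ ^ p)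
  refine hsum.of_nonneg_of_le (fun m ↦ by positivity) fun m ↦ ?_
  have hm : (0 : ℝ) < m + 1 := by positivity
  calc ((m : ℝ) + 1) ^ (p - 1) * ‖z / ((z + m + 1) * (m + 1))‖ ^ p
    _ ≤ ((m : ℝ) + 1) ^ (p - 1) * (‖z‖ / ((m : ℝ) + 1) ^ 2) ^ p := by
        gcongr
        exact norm_div_add_nat_mul_le hz m
    _ = ‖z‖ ^ p * (((m : ℝ) + 1) ^ (p - 1) / ((m : ℝ) + 1) ^ (2 * p)) := by
        rw [Real.div_rpow (by positivity) (by positivity), ← Real.rpow_natCast_mul hm.le]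
        push_cast
        ring
    _ = ‖z‖ ^ p * ((m : ℝ) + 1) ^ (-(p + 1)) := by
        rw [← Real.rpow_sub hm]
        ring_nf

/-- For a fixed positive integer `k`, the lower-triangular matrix with entries
`a_{m,n} = k/((k+m+1)(m+1))` for `m ≥ n` (and `0` otherwise) defines a bounded operator on
`ℓ²(ℕ)`, and this operator is compact. -/
theorem compact_triangular_operator (k : ℕ) (hk : 0 < k) :
    ∃ A : L2 ℕ →L[ℂ] L2 ℕ,
      (∀ (x : L2 ℕ) (m : ℕ),
        A x m = ((k : ℂ) / (((k : ℂ) + m + 1) * ((m : ℂ) + 1))) *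
          ∑ n ∈ Finset.range (m + 1), x n) ∧
      IsCompactOperator A := by
  simpa only [smul_eq_mul] using compact_triangular_operator_general (p := 2) (E := ℂ) (by simp)
    (summable_rpow_mul_norm_div_rpow (z := k) (by simp) (by simp))
end
end
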